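/- Let ν be a σ-finite measure on a measurable space K, let α and β be finite measures on K with α ≪ ν and β ≪ ν, and let γ be a finite signed measure on K with γ ≪ ν. Suppose that for all rational numbers s, t and every measurable set B one has s²·α(B) − 2st·γ(B) + t²·β(B) ≥ 0. Then (dγ/dν)² ≤ (dα/dν)·(dβ/dν) holds ν-almost everywhere, and consequently ∫_K (√(dα/dν) − √(dβ/dν))² dν ≤ α(K) − 2γ(K) + β(K). -/

import Mathlib

open MeasureTheory

/-- A real quadratic form that is nonnegative at the points `(s, 1)` with `s` rational satisfies
the Cauchy-Schwarz inequality. -/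
theorem sq_le_mul_of_forall_rat_nonneg {a b g : ℝ}
    (h : ∀ s : ℚ, 0 ≤ (s : ℝ) ^ 2 * a - 2 * s * g + b) : g ^ 2 ≤ a * b := by
  have hreal (s : ℝ) : 0 ≤ s ^ 2 * a - 2 * s * g + b :=
    (Rat.denseRange_cast (𝕜 := ℝ)).induction_on (p := fun s => 0 ≤ s ^ 2 * a - 2 * s * g + b) s
      (isClosed_le continuous_const (by fun_prop)) h
  have hd : discrim a (-2 * g) b ≤ 0 := discrim_le_zero fun s => by linarith [hreal s]
  rw [discrim] at hd
  linarith

theorem sq_sqrt_sub_sqrt_le {a b g : ℝ} (ha : 0 ≤ a) (hb : 0 ≤ b) (h : g ^ 2 ≤ a * b) :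
    (√a - √b) ^ 2 ≤ a - 2 * g + b := by
  have hg : g ≤ √a * √b := by
    rw [← Real.sqrt_mul ha]
    exact Real.le_sqrt_of_sq_le h
  nlinarith [Real.sq_sqrt ha, Real.sq_sqrt hb]

/-- The Radon-Nikodym theorem for signed measures, evaluated on a set. -/
theorem setIntegral_signedMeasure_rnDeriv {K : Type*} [MeasurableSpace K] {ν : Measure K}
    [SigmaFinite ν] {γ : SignedMeasure K} (hγ : γ ≪ᵥ ν.toENNRealVectorMeasure) {B : Set K}
    (hB : MeasurableSet B) : ∫ x in B, γ.rnDeriv ν x ∂ν = γ B := by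
  rw [← withDensityᵥ_apply (SignedMeasure.integrable_rnDeriv γ ν) hB,
    SignedMeasure.withDensityᵥ_rnDeriv_eq γ ν hγ]

/-- Abstract content of Lemma 2.3(i): if `s²·α(B) − 2st·γ(B) + t²·β(B) ≥ 0` for all rationals
`s, t` and all measurable `B`, then `(dγ/dν)² ≤ (dα/dν)·(dβ/dν)` ν-a.e., and the square-root
inequality for the integrals follows. -/
theorem stmt1 {K : Type*} [MeasurableSpace K]
    (ν : Measure K) [SigmaFinite ν]
    (α β : Measure K) [IsFiniteMeasure α] [IsFiniteMeasure β]
    (hα : α ≪ ν) (hβ : β ≪ ν)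
    (γ : SignedMeasure K)
    (hγ : γ ≪ᵥ ν.toENNRealVectorMeasure)
    (hpos : ∀ (s t : ℚ) (B : Set K), MeasurableSet B →
      0 ≤ (s : ℝ) ^ 2 * (α B).toReal - 2 * (s : ℝ) * (t : ℝ) * γ B
        + (t : ℝ) ^ 2 * (β B).toReal) :
    (∀ᵐ x ∂ν, (SignedMeasure.rnDeriv γ ν x) ^ 2
        ≤ (α.rnDeriv ν x).toReal * (β.rnDeriv ν x).toReal) ∧
    ∫ x, (Real.sqrt (α.rnDeriv ν x).toReal - Real.sqrt (β.rnDeriv ν x).toReal) ^ 2 ∂ν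
      ≤ (α Set.univ).toReal - 2 * γ Set.univ + (β Set.univ).toReal := by
  have ia : Integrable (fun x => (α.rnDeriv ν x).toReal) ν := Measure.integrable_toReal_rnDeriv
  have ib : Integrable (fun x => (β.rnDeriv ν x).toReal) ν := Measure.integrable_toReal_rnDeriv
  have ig : Integrable (γ.rnDeriv ν) ν := SignedMeasure.integrable_rnDeriv γ ν
  have hint (s : ℝ) : Integrable (fun x => s ^ 2 * (α.rnDeriv ν x).toReal
      - 2 * s * γ.rnDeriv ν x + (β.rnDeriv ν x).toReal) ν :=
    ((ia.const_mul _).sub (ig.const_mul _)).add ib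
  have hset (s : ℝ) {B : Set K} (hB : MeasurableSet B) :
      ∫ x in B, (s ^ 2 * (α.rnDeriv ν x).toReal
        - 2 * s * γ.rnDeriv ν x + (β.rnDeriv ν x).toReal) ∂ν
        = s ^ 2 * (α B).toReal - 2 * s * γ B + (β B).toReal := by
    have ia' := (ia.const_mul (s ^ 2)).restrict (s := B)
    have ig' := (ig.const_mul (2 * s)).restrict (s := B)
    rw [integral_add (f := fun x => s ^ 2 * (α.rnDeriv ν x).toReal - 2 * s * γ.rnDeriv ν x)
      (ia'.sub ig') ib.restrict, integral_sub ia' ig', integral_const_mul,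
      integral_const_mul, Measure.setIntegral_toReal_rnDeriv hα,
      Measure.setIntegral_toReal_rnDeriv hβ, setIntegral_signedMeasure_rnDeriv hγ hB]
    rfl
  have hcs : ∀ᵐ x ∂ν, (γ.rnDeriv ν x) ^ 2
      ≤ (α.rnDeriv ν x).toReal * (β.rnDeriv ν x).toReal := by
    have hall : ∀ᵐ x ∂ν, ∀ s : ℚ, 0 ≤ (s : ℝ) ^ 2 * (α.rnDeriv ν x).toReal
        - 2 * s * γ.rnDeriv ν x + (β.rnDeriv ν x).toReal := by
      refine ae_all_iff.2 fun s =>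
        ae_nonneg_of_forall_setIntegral_nonneg (hint s) fun B hB _ => ?_
      rw [hset s hB]
      simpa using hpos s 1 B hB
    filter_upwards [hall] with x hx using sq_le_mul_of_forall_rat_nonneg hx
  refine ⟨hcs, ?_⟩
  have huniv := hset 1 MeasurableSet.univ
  have hint1 := hint 1
  simp only [one_pow, one_mul, mul_one, Measure.restrict_univ] at huniv hint1
  rw [← huniv]
  refine integral_mono_of_nonneg (.of_forall fun x => sq_nonneg _) hint1 ?_
  filter_upwards [hcs] with x hx
    using sq_sqrt_sub_sqrt_le ENNReal.toReal_nonneg ENNReal.toReal_nonneg hx
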